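/- Let (X₁, X₂) be bivariate normal with non-degenerate benchmark Y = α₁X₁ + α₂X₂. For any 0 ≤ a < b ≤ 1 and A = A(a,b), the conditional mean satisfies, for j = 1, 2: E[X_j | Y ∈ A] = μ_j + (Cov(Y, X_j)/σ(Y))·λ_{A,1}. -/

import Mathlib

open MeasureTheory ProbabilityTheory Filter Set

noncomputable section

/-- Covariance of two real random variables under the measure `m`. -/
def covar {Ω : Type*} [MeasurableSpace Ω] (m : Measure Ω) (f g : Ω → ℝ) : ℝ :=
  ∫ ω, (f ω - ∫ x, f x ∂m) * (g ω - ∫ x, g x ∂m) ∂m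

/-- Generalized inverse of the CDF of a measure on `ℝ`, `F⁻¹(p) = inf {y | F(y) ≥ p}`,
with values in `EReal` (`⊥` at `p = 0` and `⊤` at `p = 1` for fully supported laws). -/
def invCDF (μ : Measure ℝ) (p : ℝ) : EReal :=
  sInf ((fun x : ℝ => (x : EReal)) '' {x : ℝ | p ≤ cdf μ x})

/-- Quantile conditioning set `A(a,b) = {y : F⁻¹(a) < y < F⁻¹(b)}`. -/
def qSet (μ : Measure ℝ) (a b : ℝ) : Set ℝ :=
  {y : ℝ | invCDF μ a < (y : EReal) ∧ (y : EReal) < invCDF μ b}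

/-- `λ_{A,1} = E[V | V ∈ A_V]`, the first conditional moment of a standard normal on the
quantile set `A_V = (Φ⁻¹(a), Φ⁻¹(b))`. -/
def lambdaA1 (a b : ℝ) : ℝ :=
  ∫ x, x ∂((gaussianReal 0 1)[|qSet (gaussianReal 0 1) a b])

/-- `λ_{A,2} = E[V² | V ∈ A_V]`, the second conditional moment of a standard normal on the
quantile set `A_V = (Φ⁻¹(a), Φ⁻¹(b))`. -/
def lambdaA2 (a b : ℝ) : ℝ :=
  ∫ x, x ^ 2 ∂((gaussianReal 0 1)[|qSet (gaussianReal 0 1) a b])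

/-!
Let `β = cov(Y, X) / Var Y`. The residual `X - β Y` is uncorrelated with `Y`, hence independent of
it by joint normality, so conditioning on `Y ∈ A` does not move its mean and
`E[X | Y ∈ A] = E X + β E[Y - E Y | Y ∈ A]`. Increasing bijections of `ℝ` carry quantile sets to
quantile sets, so `V = (Y - E Y) / σ(Y)` is a standard normal for which `Y ∈ A(a, b)` is the event
`V ∈ A_V`; therefore `E[Y - E Y | Y ∈ A] = σ(Y) λ_{A,1}`.
-/

section QuantileSet

variable {μ : Measure ℝ} {a b p y : ℝ}

theorem invCDF_lt_coe_iff : invCDF μ p < (y : EReal) ↔ ∃ x < y, p ≤ cdf μ x := by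
  simp only [invCDF, sInf_lt_iff, exists_mem_image, mem_ofPred_eq, EReal.coe_lt_coe_iff]
  simp only [and_comm]

theorem coe_lt_invCDF_iff : (y : EReal) < invCDF μ p ↔ ∃ z > y, cdf μ z < p := by
  constructor
  · intro h
    obtain ⟨z, hyz, hz⟩ := EReal.lt_iff_exists_real_btwn.1 h
    refine ⟨z, EReal.coe_lt_coe_iff.1 hyz, ?_⟩
    by_contra! hp
    exact hz.not_ge (sInf_le (mem_image_of_mem _ hp))
  · rintro ⟨z, hyz, hz⟩
    refine (EReal.coe_lt_coe_iff.2 hyz).trans_le (le_sInf ?_)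
    rintro _ ⟨x, hx, rfl⟩
    exact EReal.coe_le_coe_iff.2 ((monotone_cdf μ).reflect_lt (hz.trans_le hx)).le

theorem mem_qSet_iff : y ∈ qSet μ a b ↔ (∃ x < y, a ≤ cdf μ x) ∧ ∃ z > y, cdf μ z < b :=
  and_congr invCDF_lt_coe_iff coe_lt_invCDF_iff

theorem measurableSet_qSet (μ : Measure ℝ) (a b : ℝ) : MeasurableSet (qSet μ a b) :=
  (measurableSet_lt measurable_const measurable_coe_real_ereal).inter
    (measurableSet_lt measurable_coe_real_ereal measurable_const)

theorem continuous_cdf (μ : Measure ℝ) [IsProbabilityMeasure μ] [NullSingletonClass μ] :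
    Continuous (cdf μ) := by
  refine continuous_iff_continuousAt.2 fun x => ?_
  rw [(monotone_cdf μ).continuousAt_iff_leftLim_eq_rightLim, StieltjesFunction.rightLim_eq]
  have hjump : ENNReal.ofReal (cdf μ x - Function.leftLim (cdf μ) x) = 0 := by
    rw [← StieltjesFunction.measure_singleton, measure_cdf, measure_singleton]
  exact ((monotone_cdf μ).leftLim_le le_rfl).antisymm
    (sub_nonpos.1 (ENNReal.ofReal_eq_zero.1 hjump))

theorem Ioo_subset_range_cdf (μ : Measure ℝ) [IsProbabilityMeasure μ] [NullSingletonClass μ] :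
    Ioo 0 1 ⊆ range (cdf μ) := fun _p hp =>
  have ⟨x, hx⟩ := ((tendsto_cdf_atBot μ).eventually_lt_const hp.1).exists
  have ⟨z, hz⟩ := ((tendsto_cdf_atTop μ).eventually_const_lt hp.2).exists
  mem_range_of_exists_le_of_exists_ge (continuous_cdf μ) ⟨x, hx.le⟩ ⟨z, hz.le⟩

theorem measure_qSet_ne_zero (μ : Measure ℝ) [IsProbabilityMeasure μ] [NullSingletonClass μ]
    (ha : 0 ≤ a) (hab : a < b) (hb : b ≤ 1) : μ (qSet μ a b) ≠ 0 := by
  obtain ⟨q, haq, hqb⟩ := exists_between hab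
  obtain ⟨p, hap, hpq⟩ := exists_between haq
  obtain ⟨x, rfl⟩ := Ioo_subset_range_cdf μ ⟨ha.trans_lt hap, (hpq.trans hqb).trans_le hb⟩
  obtain ⟨z, rfl⟩ := Ioo_subset_range_cdf μ ⟨ha.trans_lt haq, hqb.trans_le hb⟩
  have hsub : Ioo x z ⊆ qSet μ a b := fun _y hy =>
    mem_qSet_iff.2 ⟨⟨x, hy.1, hap.le⟩, ⟨z, hy.2, hqb⟩⟩
  have hIoo : μ (Ioo x z) = ENNReal.ofReal (cdf μ z - cdf μ x) := by
    rw [measure_congr Ioo_ae_eq_Ioc, ← StieltjesFunction.measure_Ioc, measure_cdf]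
  refine fun h => (ENNReal.ofReal_pos.2 (sub_pos.2 hpq)).ne' ?_
  rw [← hIoo, measure_mono_null hsub h]

theorem cdf_map_orderIso (μ : Measure ℝ) [IsProbabilityMeasure μ] (e : ℝ ≃o ℝ) (x : ℝ) :
    cdf (μ.map e) (e x) = cdf μ x := by
  have he : Measurable e := e.continuous.measurable
  have := Measure.isProbabilityMeasure_map (μ := μ) he.aemeasurable
  rw [cdf_eq_real, cdf_eq_real, map_measureReal_apply he measurableSet_Iic, e.preimage_Iic,
    e.symm_apply_apply]

theorem preimage_qSet_map_orderIso (μ : Measure ℝ) [IsProbabilityMeasure μ] (e : ℝ ≃o ℝ)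
    (a b : ℝ) : e ⁻¹' qSet (μ.map e) a b = qSet μ a b := by
  ext y
  rw [mem_preimage, mem_qSet_iff, mem_qSet_iff]
  refine and_congr (e.surjective.exists.trans ?_) (e.surjective.exists.trans ?_) <;>
    simp only [gt_iff_lt, e.lt_iff_lt, cdf_map_orderIso]

end QuantileSet

section Conditioning

variable {Ω : Type*} [MeasurableSpace Ω] {P : Measure Ω}

theorem hasLaw_cond_preimage {𝓧 : Type*} [MeasurableSpace 𝓧] {ν : Measure 𝓧} {T : Ω → 𝓧}
    (hT : HasLaw T ν P) {A : Set 𝓧} (hA : MeasurableSet A) :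
    HasLaw T (ν[|A]) (P[|T ⁻¹' A]) where
  aemeasurable := hT.aemeasurable.mono_ac cond_absolutelyContinuous
  map_eq := by
    rw [ProbabilityTheory.cond, ProbabilityTheory.cond, Measure.map_smul,
      ← Measure.restrict_map_of_aemeasurable hT.aemeasurable hA,
      ← Measure.map_apply_of_aemeasurable hT.aemeasurable hA, hT.map_eq]

theorem integrable_cond {E : Type*} [NormedAddCommGroup E] {f : Ω → E} (hf : Integrable f P)
    {s : Set Ω} (hs : P s ≠ 0) : Integrable f (P[|s]) :=
  hf.restrict.smul_measure (ENNReal.inv_ne_top.2 hs)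

theorem integral_cond_preimage_of_indepFun [IsFiniteMeasure P] {E 𝓨 : Type*}
    [NormedAddCommGroup E] [NormedSpace ℝ E] [MeasurableSpace E] [BorelSpace E]
    [MeasurableSpace 𝓨] {Z : Ω → E} {Y : Ω → 𝓨} (hYZ : IndepFun Y Z P)
    (hZ : AEStronglyMeasurable Z P) (hY : AEMeasurable Y P) {A : Set 𝓨} (hA : MeasurableSet A)
    (hPA : P (Y ⁻¹' A) ≠ 0) : ∫ ω, Z ω ∂P[|Y ⁻¹' A] = ∫ ω, Z ω ∂P := by
  have hYA : NullMeasurableSet (Y ⁻¹' A) P := hY.nullMeasurableSet_preimage hA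
  have hind : IndepFun ((Y ⁻¹' A).indicator (1 : Ω → ℝ)) Z P :=
    hYZ.comp (measurable_one.indicator hA) measurable_id
  have hset : ∫ ω in Y ⁻¹' A, Z ω ∂P = P.real (Y ⁻¹' A) • ∫ ω, Z ω ∂P :=
    calc ∫ ω in Y ⁻¹' A, Z ω ∂P
        = ∫ ω, ((Y ⁻¹' A).indicator (1 : Ω → ℝ) • Z) ω ∂P := by
          rw [← integral_indicator₀ hYA]
          congr with ω
          by_cases hω : ω ∈ Y ⁻¹' A <;> simp [hω]
      _ = P.real (Y ⁻¹' A) • ∫ ω, Z ω ∂P := by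
          rw [hind.integral_smul_eq_smul_integral
            (aestronglyMeasurable_one.indicator₀ hYA) hZ, integral_indicator₀ hYA]
          simp
  have hne : P.real (Y ⁻¹' A) ≠ 0 := (measureReal_ne_zero_iff (measure_ne_top _ _)).2 hPA
  rw [ProbabilityTheory.cond, integral_smul_measure, hset, ENNReal.toReal_inv, ← measureReal_def,
    inv_smul_smul₀ hne]

end Conditioning

/-- The standardization `y ↦ (y - m) / s` with location `m` and scale `s`, bundled as an order
isomorphism so that it can transport quantile sets. -/
def standardize (m : ℝ) {s : ℝ} (hs : 0 < s) : ℝ ≃o ℝ :=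
  (OrderIso.subRight m).trans (OrderIso.divRight₀ s hs)

section Gaussian

variable {Ω : Type*} [MeasurableSpace Ω] {P : Measure Ω} {X Y : Ω → ℝ}

theorem hasGaussianLaw_prodMk_of_forall_linearCombination
    (h : ∀ c d : ℝ, HasGaussianLaw (fun ω => c * X ω + d * Y ω) P) :
    HasGaussianLaw (fun ω => (X ω, Y ω)) P where
  isGaussian_map := by
    have hX : AEMeasurable X P := by simpa using (h 1 0).aemeasurable
    have hY : AEMeasurable Y P := by simpa using (h 0 1).aemeasurable
    have hXY : AEMeasurable (fun ω => (X ω, Y ω)) P := hX.prodMk hY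
    refine ⟨fun L => ?_⟩
    have hL : L ∘ (fun ω => (X ω, Y ω)) = fun ω => L (1, 0) * X ω + L (0, 1) * Y ω := by
      ext ω
      have hbasis : (X ω, Y ω) = X ω • ((1, 0) : ℝ × ℝ) + Y ω • ((0, 1) : ℝ × ℝ) := by simp
      simp only [Function.comp_apply, hbasis, map_add, map_smul, smul_eq_mul, mul_comm]
    have hLXY : HasGaussianLaw (L ∘ fun ω => (X ω, Y ω)) P := hL ▸ h (L (1, 0)) (L (0, 1))
    rw [AEMeasurable.map_map_of_aemeasurable (by fun_prop) hXY, hLXY.map_eq_gaussianReal,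
      integral_map hXY (by fun_prop), variance_map (by fun_prop) hXY]
    rfl

theorem integral_eq_of_map_eq_gaussianReal {m : ℝ} {v : NNReal}
    (h : P.map X = gaussianReal m v) : P[X] = m :=
  have hX : AEMeasurable X P := aemeasurable_of_map_neZero (by rw [h]; infer_instance)
  (HasLaw.mk hX h).integral_eq.trans integral_id_gaussianReal

theorem hasLaw_standardize (hY : HasGaussianLaw Y P) (hVar : 0 < Var[Y; P]) :
    HasLaw (fun ω => standardize P[Y] (Real.sqrt_pos.2 hVar) (Y ω)) (gaussianReal 0 1) P := by
  have hlaw : HasLaw Y (gaussianReal P[Y] Var[Y; P].toNNReal) P :=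
    ⟨hY.aemeasurable, hY.map_eq_gaussianReal⟩
  have h := gaussianReal_div_const (gaussianReal_sub_const hlaw P[Y]) √Var[Y; P]
  have hvar : Var[Y; P].toNNReal / .mk (√Var[Y; P] ^ 2) (sq_nonneg _) = 1 := by
    ext
    simp [Real.sq_sqrt hVar.le, Real.coe_toNNReal _ hVar.le, hVar.ne']
  rwa [sub_self, zero_div, hvar] at h

theorem preimage_qSet_eq_standardize_preimage (hY : HasGaussianLaw Y P) (hVar : 0 < Var[Y; P])
    (a b : ℝ) :
    Y ⁻¹' qSet (P.map Y) a b =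
      (fun ω => standardize P[Y] (Real.sqrt_pos.2 hVar) (Y ω)) ⁻¹'
        qSet (gaussianReal 0 1) a b := by
  have := hY.isGaussian_map
  set e := standardize P[Y] (Real.sqrt_pos.2 hVar)
  have he : AEMeasurable e (P.map Y) := e.continuous.aemeasurable
  have hmap : (P.map Y).map e = gaussianReal 0 1 := by
    rw [AEMeasurable.map_map_of_aemeasurable he hY.aemeasurable]
    exact (hasLaw_standardize hY hVar).map_eq
  rw [← preimage_qSet_map_orderIso (P.map Y) e, hmap]
  rfl

theorem integral_sub_mean_cond_qSet (hY : HasGaussianLaw Y P) (hVar : 0 < Var[Y; P]) (a b : ℝ) :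
    ∫ ω, (Y ω - P[Y]) ∂P[|Y ⁻¹' qSet (P.map Y) a b] = √Var[Y; P] * lambdaA1 a b := by
  have hscore : ∫ ω, (Y ω - P[Y]) / √Var[Y; P] ∂P[|Y ⁻¹' qSet (P.map Y) a b] = lambdaA1 a b := by
    rw [preimage_qSet_eq_standardize_preimage hY hVar]
    exact (hasLaw_cond_preimage (hasLaw_standardize hY hVar)
      (measurableSet_qSet _ a b)).integral_eq
  rw [← hscore, integral_div, mul_div_cancel₀ _ (Real.sqrt_pos.2 hVar).ne']

theorem measure_preimage_qSet_ne_zero (hY : HasGaussianLaw Y P) (hVar : 0 < Var[Y; P]) {a b : ℝ}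
    (ha : 0 ≤ a) (hab : a < b) (hb : b ≤ 1) : P (Y ⁻¹' qSet (P.map Y) a b) ≠ 0 := by
  have := hY.isGaussian_map
  have : NullSingletonClass (P.map Y) := by
    rw [hY.map_eq_gaussianReal]
    exact nullSingletonClass_gaussianReal (Real.toNNReal_pos.2 hVar).ne'
  rw [← Measure.map_apply_of_aemeasurable hY.aemeasurable (measurableSet_qSet _ a b)]
  exact measure_qSet_ne_zero _ ha hab hb

theorem indepFun_sub_regression (hXY : HasGaussianLaw (fun ω => (X ω, Y ω)) P)
    (hVar : Var[Y; P] ≠ 0) :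
    IndepFun Y (fun ω => X ω - cov[Y, X; P] / Var[Y; P] * Y ω) P := by
  have := hXY.isProbabilityMeasure
  set β := cov[Y, X; P] / Var[Y; P] with hβ
  have hlaw : HasGaussianLaw (fun ω => (Y ω, X ω - β * Y ω)) P :=
    hXY.map_fun ((ContinuousLinearMap.snd ℝ ℝ ℝ).prod
      (ContinuousLinearMap.fst ℝ ℝ ℝ - β • ContinuousLinearMap.snd ℝ ℝ ℝ))
  refine hlaw.indepFun_of_covariance_eq_zero ?_
  rw [covariance_fun_sub_right hXY.snd.memLp_two hXY.fst.memLp_two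
      (hXY.snd.memLp_two.const_mul β), covariance_const_mul_right,
    covariance_self hXY.snd.aemeasurable, hβ, div_mul_cancel₀ _ hVar, sub_self]

theorem integral_cond_preimage_eq_regression (hXY : HasGaussianLaw (fun ω => (X ω, Y ω)) P)
    (hVar : Var[Y; P] ≠ 0) {A : Set ℝ} (hA : MeasurableSet A) (hPA : P (Y ⁻¹' A) ≠ 0) :
    ∫ ω, X ω ∂P[|Y ⁻¹' A] =
      P[X] + cov[Y, X; P] / Var[Y; P] * ∫ ω, (Y ω - P[Y]) ∂P[|Y ⁻¹' A] := by
  have := hXY.isProbabilityMeasure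
  have := cond_isProbabilityMeasure hPA
  have hX := hXY.fst.integrable
  have hY := hXY.snd.integrable
  have hβY := hY.const_mul (cov[Y, X; P] / Var[Y; P])
  have hres := integral_cond_preimage_of_indepFun (indepFun_sub_regression hXY hVar)
    (hX.sub hβY).aestronglyMeasurable hXY.snd.aemeasurable hA hPA
  rw [integral_sub (integrable_cond hX hPA) (integrable_cond hβY hPA), integral_sub hX hβY,
    integral_const_mul, integral_const_mul] at hres
  rw [integral_sub (integrable_cond hY hPA) (integrable_const _), integral_const, probReal_univ,
    one_smul]
  linear_combination hres

end Gaussian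

theorem conditional_mean_bivariate_normal_general
    {Ω : Type*} [MeasurableSpace Ω] {P : Measure Ω} {X Y : Ω → ℝ}
    (hXY : HasGaussianLaw (fun ω => (X ω, Y ω)) P) (hVar : 0 < Var[Y; P])
    {a b : ℝ} (ha : 0 ≤ a) (hab : a < b) (hb : b ≤ 1) :
    ∫ ω, X ω ∂P[|Y ⁻¹' qSet (P.map Y) a b] =
      P[X] + covar P Y X / √Var[Y; P] * lambdaA1 a b := by
  have hPA := measure_preimage_qSet_ne_zero hXY.snd hVar ha hab hb
  have hσ : √Var[Y; P] / Var[Y; P] = 1 / √Var[Y; P] := Real.sqrt_div_self'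
  rw [integral_cond_preimage_eq_regression hXY hVar.ne' (measurableSet_qSet _ a b) hPA,
    integral_sub_mean_cond_qSet hXY.snd hVar, show covar P Y X = cov[Y, X; P] from rfl]
  linear_combination cov[Y, X; P] * lambdaA1 a b * hσ

/-- For a bivariate normal `(X₁, X₂)` with non-degenerate benchmark
`Y = α₁X₁ + α₂X₂` and any `0 ≤ a < b ≤ 1` with `A = A(a,b)`:
`E[X_j | Y ∈ A] = μ_j + (Cov(Y, X_j)/σ(Y))·λ_{A,1}` for `j = 1, 2`. -/
theorem conditional_mean_bivariate_normal
    {Ω : Type*} [MeasureSpace Ω] [IsProbabilityMeasure (ℙ : Measure Ω)]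
    (X₁ X₂ : Ω → ℝ) (hX₁ : Measurable X₁) (hX₂ : Measurable X₂)
    (μ₁ μ₂ σ₁ σ₂ r ρ : ℝ) (hσ₁ : 0 < σ₁) (hσ₂ : 0 < σ₂)
    (hρ : ρ = r / (σ₁ * σ₂)) (hρmem : ρ ∈ Set.Ioo (-1 : ℝ) 1)
    (hGauss : ∀ c₁ c₂ : ℝ,
      (ℙ : Measure Ω).map (fun ω => c₁ * X₁ ω + c₂ * X₂ ω)
        = gaussianReal (c₁ * μ₁ + c₂ * μ₂)
            (Real.toNNReal (c₁ ^ 2 * σ₁ ^ 2 + 2 * c₁ * c₂ * r + c₂ ^ 2 * σ₂ ^ 2)))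
    (α₁ α₂ : ℝ) (hα : (α₁, α₂) ≠ (0, 0))
    (Y : Ω → ℝ) (hY : Y = fun ω => α₁ * X₁ ω + α₂ * X₂ ω)
    (hVarYpos : 0 < variance Y ℙ)
    (a b : ℝ) (ha : 0 ≤ a) (hab : a < b) (hb : b ≤ 1)
    (A : Set ℝ) (hA : A = qSet ((ℙ : Measure Ω).map Y) a b) :
    (∫ ω, X₁ ω ∂(ℙ[|Y ⁻¹' A])
        = μ₁ + covar ℙ Y X₁ / Real.sqrt (variance Y ℙ) * lambdaA1 a b)
    ∧ (∫ ω, X₂ ω ∂(ℙ[|Y ⁻¹' A])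
        = μ₂ + covar ℙ Y X₂ / Real.sqrt (variance Y ℙ) * lambdaA1 a b) := by
  subst hY hA
  have hX : HasGaussianLaw (fun ω => (X₁ ω, X₂ ω)) ℙ :=
    hasGaussianLaw_prodMk_of_forall_linearCombination fun c₁ c₂ =>
      ⟨by rw [hGauss c₁ c₂]; infer_instance⟩
  obtain rfl : ∫ ω, X₁ ω = μ₁ := integral_eq_of_map_eq_gaussianReal (by simpa using hGauss 1 0)
  obtain rfl : ∫ ω, X₂ ω = μ₂ := integral_eq_of_map_eq_gaussianReal (by simpa using hGauss 0 1)
  let fst := ContinuousLinearMap.fst ℝ ℝ ℝ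
  let snd := ContinuousLinearMap.snd ℝ ℝ ℝ
  let benchmark := α₁ • fst + α₂ • snd
  have h₁ := hX.map_fun (fst.prod benchmark)
  have h₂ := hX.map_fun (snd.prod benchmark)
  exact ⟨conditional_mean_bivariate_normal_general h₁ hVarYpos ha hab hb,
    conditional_mean_bivariate_normal_general h₂ hVarYpos ha hab hb⟩
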